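/- arXiv:1310.2291 — 3 statements merged into one kernel-verified Lean document; each statement's English description precedes it below -/
import Mathlib

section
/- Corollary 1, first part: Suppose the cross-reconstruction distortion measures d_AB and d_BA are bounded and satisfy d_AB(a,b) = 0 iff a = b and d_BA(a,b) = 0 iff a = b, and suppose 𝒵̂_A = 𝒲̂_B and 𝒵̂_B = 𝒲̂_A. Then for discrete memoryless sources (X,Y) ~ p(x,y) and t rounds of sequential communication starting from terminal A, the common-reconstruction rate-distortion region equals the constrained-reconstruction region at zero cross distortions: 𝓡_CR^{(t)}(D_A,D_B) = 𝓡^{(t)}(D_A,D_B,0,0). -/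
/-!
The two regions agree because block agreement and vanishing cross distortion can be converted into
each other at no cost in rate.

Block agreement implies vanishing cross distortion: the cross distortions are at most the probability
of block disagreement times the largest value of the distortion measure
(`achievable_of_achievableCR`).

Conversely, let the cross distortions be at most `δ`. On the finite reconstruction alphabets a
nonzero cross distortion is bounded away from zero, so the pair of sequences `(Ẑ_A, Ŵ_A)` held by A
and the pair `(Ŵ_B, Ẑ_B)` held by B differ in an expected fraction of positions of order `δ`, and by
Markov's inequality they are within Hamming distance `ρ n` except with probability of order `δ / ρ`.

* With at least one round (`achievableCR_succ`), the last speaker appends to the last message a hash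
  of its pair of sequences. The hash is a proper colouring of the graph joining sequences at distance
  at most `2 ρ n`; since Hamming balls of that radius have at most `2 ^ (n η)` elements for small `ρ`,
  a greedy colouring needs only `2 ^ (n η)` colours (`exists_hash`). The other terminal recovers the
  speaker's pair exactly and adopts it as its own, which changes the distortions by `O(δ / ρ)`.

* With no rounds (`achievableCR_zero`), nothing can be appended. Freezing all letters but one turns a
  code into a mixture of single-letter tuples of maps `(g_A, g_B, ψ_A, ψ_B)`. There are finitely many
  tuples, so those with nonzero cross distortion carry weight `O(δ)`. They are replaced by a tuple
  with zero cross distortion, and the resulting mixture is realised by deterministic time sharing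
  (`exists_time_sharing`), which gives almost sure agreement.
-/

open scoped Classical BigOperators

noncomputable section

namespace IFC

variable {Ω : Type*} [Fintype Ω]

/-- Probability of an event under a pmf on a finite sample space. -/
def pr (μ : Ω → ℝ) (E : Ω → Prop) : ℝ := ∑ ω, if E ω then μ ω else 0

/-- `μ` is a probability mass function. -/
def IsPMF (μ : Ω → ℝ) : Prop := (∀ ω, 0 ≤ μ ω) ∧ ∑ ω, μ ω = 1

/-- Shannon entropy (base 2) of the finite-valued random variable `f`. -/
def ent {A : Type*} [Fintype A] (μ : Ω → ℝ) (f : Ω → A) : ℝ :=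
  ∑ a : A, -(pr μ fun ω => f ω = a) * Real.logb 2 (pr μ fun ω => f ω = a)

/-- Conditional entropy `H(f | g)`. -/
def condEnt {A B : Type*} [Fintype A] [Fintype B] (μ : Ω → ℝ) (f : Ω → A) (g : Ω → B) : ℝ :=
  ent μ (fun ω => (f ω, g ω)) - ent μ g

/-- Conditional mutual information `I(f; g | h)`. -/
def condMI {A B C : Type*} [Fintype A] [Fintype B] [Fintype C]
    (μ : Ω → ℝ) (f : Ω → A) (g : Ω → B) (h : Ω → C) : ℝ :=
  condEnt μ f h - condEnt μ f (fun ω => (g ω, h ω))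

/-- Markov chain `f − g − h`: `f` and `h` are conditionally independent given `g`. -/
def CondIndep {A B C : Type*} (μ : Ω → ℝ) (f : Ω → A) (g : Ω → B) (h : Ω → C) : Prop :=
  ∀ a b c, pr μ (fun ω => f ω = a ∧ g ω = b ∧ h ω = c) * pr μ (fun ω => g ω = b)
    = pr μ (fun ω => f ω = a ∧ g ω = b) * pr μ (fun ω => g ω = b ∧ h ω = c)

variable {X Y ZA ZB HZA HZB HWA HWB : Type*}

/-- The i.i.d. `n`-letter joint source distribution. -/
def prodPMF (p : X × Y → ℝ) (n : ℕ) : (Fin n → X × Y) → ℝ := fun s => ∏ i, p (s i)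

/-- First components of an `n`-letter source realization. -/
def xs {n : ℕ} (s : Fin n → X × Y) : Fin n → X := fun i => (s i).1

/-- Second components of an `n`-letter source realization. -/
def ys {n : ℕ} (s : Fin n → X × Y) : Fin n → Y := fun i => (s i).2

/-- Valid sequential interactive encoding starting from terminal A: messages of odd rounds
(those with even index `j.val`, i.e. round number `j.val + 1` odd) are functions of `x` and
the previous messages only, and messages of even rounds are functions of `y` and the previous
messages only. -/
def ValidCode {t n : ℕ} {k : Fin t → ℕ}
    (msg : (Fin n → X) → (Fin n → Y) → ∀ j : Fin t, Fin (k j)) : Prop :=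
  ∀ j : Fin t,
    (Even j.val → ∀ x y y', (∀ i, i < j → msg x y i = msg x y' i) → msg x y j = msg x y' j) ∧
    (Odd j.val → ∀ x x' y, (∀ i, i < j → msg x y i = msg x' y i) → msg x y j = msg x' y j)

/-- Per-letter average expected distortion between the symbolwise values `v` and
reconstructions `w`. -/
def avgDist [Fintype X] [Fintype Y] {A B : Type*} (p : X × Y → ℝ) (n : ℕ)
    (v : (Fin n → X × Y) → Fin n → A) (w : (Fin n → X × Y) → Fin n → B)
    (d : A → B → ℝ) : ℝ :=
  (1 / (n : ℝ)) * ∑ i : Fin n, ∑ s : Fin n → X × Y, prodPMF p n s * d (v s i) (w s i)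

/-- Operational achievability of `(R, D_A, D_B, D_AB, D_BA)` with `t` rounds of sequential
communication starting from terminal A, under constrained reconstruction constraints. -/
def Achievable [Fintype X] [Fintype Y] [Fintype HZA] [Fintype HZB] [Fintype HWA] [Fintype HWB]
    (p : X × Y → ℝ) (fA : X × Y → ZA) (fB : X × Y → ZB)
    (dA : ZA → HZA → ℝ) (dB : ZB → HZB → ℝ)
    (dAB : HZA → HWB → ℝ) (dBA : HZB → HWA → ℝ)
    (t : ℕ) (R : Fin t → ℝ) (DA DB DAB DBA : ℝ) : Prop :=
  ∀ ε : ℝ, 0 < ε → ∃ N : ℕ, ∀ n : ℕ, N ≤ n →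
    ∃ (k : Fin t → ℕ) (msg : (Fin n → X) → (Fin n → Y) → ∀ j : Fin t, Fin (k j))
      (gA : (Fin n → X) → (∀ j : Fin t, Fin (k j)) → Fin n → HZA)
      (gB : (Fin n → Y) → (∀ j : Fin t, Fin (k j)) → Fin n → HZB)
      (ψA : (Fin n → X) → (∀ j : Fin t, Fin (k j)) → Fin n → HWA)
      (ψB : (Fin n → Y) → (∀ j : Fin t, Fin (k j)) → Fin n → HWB),
      ValidCode msg ∧
      (∀ j : Fin t, (k j : ℝ) ≤ (2 : ℝ) ^ ((n : ℝ) * (R j + ε))) ∧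
      avgDist p n (fun s i => fA (s i)) (fun s i => gA (xs s) (msg (xs s) (ys s)) i) dA
        ≤ DA + ε ∧
      avgDist p n (fun s i => gA (xs s) (msg (xs s) (ys s)) i)
        (fun s i => ψB (ys s) (msg (xs s) (ys s)) i) dAB ≤ DAB + ε ∧
      avgDist p n (fun s i => fB (s i)) (fun s i => gB (ys s) (msg (xs s) (ys s)) i) dB
        ≤ DB + ε ∧
      avgDist p n (fun s i => gB (ys s) (msg (xs s) (ys s)) i)
        (fun s i => ψA (xs s) (msg (xs s) (ys s)) i) dBA ≤ DBA + ε

/-- A single-letter witness (auxiliary random variables `W_A ∈ Fin a`, `W_B ∈ Fin b`,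
`U_j ∈ Fin (m j)` jointly distributed with `(X, Y) ∼ p` via the joint pmf `q`) certifying
that the rate vector `R` lies in the single-letter region of Theorem 1. -/
def SLWitness [Fintype X] [Fintype Y] (p : X × Y → ℝ)
    (fA : X × Y → ZA) (fB : X × Y → ZB)
    (dA : ZA → HZA → ℝ) (dB : ZB → HZB → ℝ)
    (dAB : HZA → HWB → ℝ) (dBA : HZB → HWA → ℝ)
    (t : ℕ) (R : Fin t → ℝ) (DA DB DAB DBA : ℝ)
    (a b : ℕ) (m : Fin t → ℕ)
    (q : X × Y × Fin a × Fin b × (∀ j : Fin t, Fin (m j)) → ℝ) : Prop :=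
  IsPMF q ∧
  -- (X, Y) ∼ p
  (∀ x y, pr q (fun ω => ω.1 = x ∧ ω.2.1 = y) = p (x, y)) ∧
  -- Markov chain W_A − X − Y − W_B
  CondIndep q (fun ω => ω.2.2.1) (fun ω => ω.1) (fun ω => (ω.2.1, ω.2.2.2.1)) ∧
  CondIndep q (fun ω => (ω.1, ω.2.2.1)) (fun ω => ω.2.1) (fun ω => ω.2.2.2.1) ∧
  (∀ j : Fin t,
    (Even j.val →
      CondIndep q (fun ω => ω.2.2.2.2 j)
        (fun ω => (ω.1, ω.2.2.1, fun i : {i : Fin t // i < j} => ω.2.2.2.2 i.1))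
        (fun ω => ω.2.1) ∧
      condMI q (fun ω => ω.1) (fun ω => ω.2.2.2.2 j)
        (fun ω => (ω.2.1, fun i : {i : Fin t // i < j} => ω.2.2.2.2 i.1)) ≤ R j) ∧
    (Odd j.val →
      CondIndep q (fun ω => ω.2.2.2.2 j)
        (fun ω => (ω.2.1, ω.2.2.2.1, fun i : {i : Fin t // i < j} => ω.2.2.2.2 i.1))
        (fun ω => ω.1) ∧
      condMI q (fun ω => ω.2.1) (fun ω => ω.2.2.2.2 j)
        (fun ω => (ω.1, fun i : {i : Fin t // i < j} => ω.2.2.2.2 i.1)) ≤ R j)) ∧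
  ∃ (gA : X × Fin a × (∀ j : Fin t, Fin (m j)) → HZA)
    (gB : Y × Fin b × (∀ j : Fin t, Fin (m j)) → HZB)
    (ψA : X × Fin a × (∀ j : Fin t, Fin (m j)) → HWA)
    (ψB : Y × Fin b × (∀ j : Fin t, Fin (m j)) → HWB),
    (∑ ω, q ω * dA (fA (ω.1, ω.2.1)) (gA (ω.1, ω.2.2.1, ω.2.2.2.2))) ≤ DA ∧
    (∑ ω, q ω * dAB (gA (ω.1, ω.2.2.1, ω.2.2.2.2)) (ψB (ω.2.1, ω.2.2.2.1, ω.2.2.2.2))) ≤ DAB ∧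
    (∑ ω, q ω * dB (fB (ω.1, ω.2.1)) (gB (ω.2.1, ω.2.2.2.1, ω.2.2.2.2))) ≤ DB ∧
    (∑ ω, q ω * dBA (gB (ω.2.1, ω.2.2.2.1, ω.2.2.2.2)) (ψA (ω.1, ω.2.2.1, ω.2.2.2.2))) ≤ DBA

/-- The single-letter region 𝓢^{(t)} of Theorem 1. -/
def SingleLetter [Fintype X] [Fintype Y] (p : X × Y → ℝ)
    (fA : X × Y → ZA) (fB : X × Y → ZB)
    (dA : ZA → HZA → ℝ) (dB : ZB → HZB → ℝ)
    (dAB : HZA → HWB → ℝ) (dBA : HZB → HWA → ℝ)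
    (t : ℕ) (R : Fin t → ℝ) (DA DB DAB DBA : ℝ) : Prop :=
  ∃ (a b : ℕ) (m : Fin t → ℕ)
    (q : X × Y × Fin a × Fin b × (∀ j : Fin t, Fin (m j)) → ℝ),
    SLWitness p fA fB dA dB dAB dBA t R DA DB DAB DBA a b m q

/-- Operational achievability of `(R, D_A, D_B)` with `t` rounds of sequential communication
starting from terminal A, under the common reconstruction constraints
`Pr(Ŵ_B^n ≠ Ẑ_A^n) ≤ ε_n` and `Pr(Ŵ_A^n ≠ Ẑ_B^n) ≤ ε_n` with `ε_n → 0`. -/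
def AchievableCR {X Y ZA ZB HZA HZB : Type*} [Fintype X] [Fintype Y] [Fintype HZA] [Fintype HZB]
    (p : X × Y → ℝ) (fA : X × Y → ZA) (fB : X × Y → ZB)
    (dA : ZA → HZA → ℝ) (dB : ZB → HZB → ℝ)
    (t : ℕ) (R : Fin t → ℝ) (DA DB : ℝ) : Prop :=
  ∀ ε : ℝ, 0 < ε → ∃ N : ℕ, ∀ n : ℕ, N ≤ n →
    ∃ (k : Fin t → ℕ) (msg : (Fin n → X) → (Fin n → Y) → ∀ j : Fin t, Fin (k j))
      (gA : (Fin n → X) → (∀ j : Fin t, Fin (k j)) → Fin n → HZA)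
      (gB : (Fin n → Y) → (∀ j : Fin t, Fin (k j)) → Fin n → HZB)
      (ψA : (Fin n → X) → (∀ j : Fin t, Fin (k j)) → Fin n → HZB)
      (ψB : (Fin n → Y) → (∀ j : Fin t, Fin (k j)) → Fin n → HZA),
      ValidCode msg ∧
      (∀ j : Fin t, (k j : ℝ) ≤ (2 : ℝ) ^ ((n : ℝ) * (R j + ε))) ∧
      avgDist p n (fun s i => fA (s i)) (fun s i => gA (xs s) (msg (xs s) (ys s)) i) dA
        ≤ DA + ε ∧
      avgDist p n (fun s i => fB (s i)) (fun s i => gB (ys s) (msg (xs s) (ys s)) i) dB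
        ≤ DB + ε ∧
      pr (prodPMF p n) (fun s =>
        (fun i => ψB (ys s) (msg (xs s) (ys s)) i) ≠ fun i => gA (xs s) (msg (xs s) (ys s)) i)
        ≤ ε ∧
      pr (prodPMF p n) (fun s =>
        (fun i => ψA (xs s) (msg (xs s) (ys s)) i) ≠ fun i => gB (ys s) (msg (xs s) (ys s)) i)
        ≤ ε

/-! ### Hashing sequences that are known up to few errors -/

/-- Greedy colouring: if every vertex has at most `K` neighbours for the reflexive symmetric
relation `r`, itself included, then `K` colours separate distinct related vertices. -/
lemma exists_colouring {V : Type*} [Fintype V] (r : V → V → Prop) (hr : ∀ u v, r u v → r v u)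
    (hrefl : ∀ v, r v v) (K : ℕ) (hK0 : 0 < K)
    (hK : ∀ v, (Finset.univ.filter fun u => r u v).card ≤ K) :
    ∃ c : V → Fin K, ∀ u v, r u v → c u = c v → u = v := by
  suffices h : ∀ S : Finset V, ∃ c : V → Fin K, ∀ u ∈ S, ∀ v ∈ S, r u v → c u = c v → u = v by
    obtain ⟨c, hc⟩ := h Finset.univ
    exact ⟨c, fun u v => hc u (Finset.mem_univ _) v (Finset.mem_univ _)⟩
  intro S
  induction S using Finset.induction_on with
  | empty => exact ⟨fun _ => ⟨0, hK0⟩, by simp⟩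
  | insert a S ha ih =>
    obtain ⟨c, hc⟩ := ih
    have hlt : (((Finset.univ.filter fun u => r u a).erase a).image c).card
        < (Finset.univ : Finset (Fin K)).card := by
      refine lt_of_le_of_lt Finset.card_image_le ?_
      have : a ∈ Finset.univ.filter fun u => r u a := by simp [hrefl]
      rw [Finset.card_erase_of_mem this, Finset.card_univ, Fintype.card_fin]
      have := hK a
      omega
    obtain ⟨k, -, hk⟩ := Finset.exists_mem_notMem_of_card_lt_card hlt
    have hk' : ∀ u, r u a → u ≠ a → c u ≠ k := by
      intro u hu hne he
      exact hk (Finset.mem_image.2 ⟨u, by simp [hu, hne], he⟩)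
    refine ⟨Function.update c a k, ?_⟩
    intro u hu v hv huv he
    by_cases h1 : u = a <;> by_cases h2 : v = a
    · rw [h1, h2]
    · subst h1
      simp [Function.update_of_ne h2] at he
      exact absurd he.symm (hk' v (hr _ _ huv) h2)
    · subst h2
      simp [Function.update_of_ne h1] at he
      exact absurd he (hk' u huv h1)
    · rw [Function.update_of_ne h1, Function.update_of_ne h2] at he
      exact hc u (by simpa [h1] using hu) v (by simpa [h2] using hv) huv he

/-- Exponential-moment bound; for small `a` it controls the size of Hamming balls of radius linear
in `n`. -/
lemma sum_pow_hammingDist_le {Q : Type*} [Fintype Q] [DecidableEq Q] (n : ℕ) (v : Fin n → Q)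
    (a : ℝ) (ha : 0 ≤ a) :
    ∑ u : Fin n → Q, a ^ hammingDist u v ≤ (1 + Fintype.card Q * a) ^ n := by
  have h1 : ∀ u : Fin n → Q, a ^ hammingDist u v = ∏ i, if u i = v i then 1 else a := by
    intro u
    simp only [hammingDist]
    rw [Finset.prod_ite]
    simp
  have h2 : ∑ u : Fin n → Q, a ^ hammingDist u v
      = ∏ i, ∑ q : Q, if q = v i then 1 else a := by
    rw [Finset.prod_univ_sum]
    simp [h1]
  rw [h2]
  calc _ ≤ ∏ _i : Fin n, (1 + Fintype.card Q * a) := by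
        refine Finset.prod_le_prod (fun i _ => Finset.sum_nonneg fun q _ => ?_) fun i _ => ?_
        · split_ifs <;> linarith
        · calc _ ≤ ∑ q : Q, ((if q = v i then 1 else 0) + a) := by
                refine Finset.sum_le_sum fun q _ => ?_
                split_ifs <;> linarith
            _ = _ := by simp [Finset.sum_add_distrib]
    _ = _ := by simp

/-- For every rate `η > 0` there is an error fraction `ρ > 0` such that a hash of rate `η` lets a
decoder who knows a sequence `v` within `ρ n` errors of `u` recover `u` exactly. The hash is a
colouring in which sequences at distance at most `2 ρ n` get different colours, and the decoder
picks the only sequence near `v` with the right colour. -/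
lemma exists_hash (Q : Type*) [Fintype Q] [DecidableEq Q] (η : ℝ) (hη : 0 < η) :
    ∃ ρ : ℝ, 0 < ρ ∧ ∀ n : ℕ, ∃ K : ℕ, 0 < K ∧ (K : ℝ) ≤ (2 : ℝ) ^ ((n : ℝ) * η) ∧
      ∃ (h : (Fin n → Q) → Fin K) (dec : (Fin n → Q) → Fin K → (Fin n → Q)),
        ∀ u v, (hammingDist u v : ℝ) ≤ ρ * n → dec v (h u) = u := by
  have h2 : (0 : ℝ) < 2 := by norm_num
  have hgap : 0 < ((2 : ℝ) ^ (η / 2) - 1) / (Fintype.card Q + 1) := by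
    have : (1 : ℝ) < 2 ^ (η / 2) := Real.one_lt_rpow (by norm_num) (by linarith)
    apply div_pos <;> [linarith; positivity]
  -- The base `a = 2 ^ (-L)` is small enough that `1 + |Q| a ≤ 2 ^ (η / 2)`.
  obtain ⟨L0, hL0⟩ := exists_pow_lt_of_lt_one hgap (show (1 / 2 : ℝ) < 1 by norm_num)
  set L := L0 + 1 with hL
  have hLpos : (0 : ℝ) < L := by rw [hL]; positivity
  set a : ℝ := (1 / 2) ^ L with ha
  have hapos : 0 < a := by positivity
  have hale : 1 + Fintype.card Q * a ≤ (2 : ℝ) ^ (η / 2) := by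
    have : a ≤ (1 / 2) ^ L0 := pow_le_pow_of_le_one (by norm_num) (by norm_num) (by omega)
    have h3 : a < ((2 : ℝ) ^ (η / 2) - 1) / (Fintype.card Q + 1) := lt_of_le_of_lt this hL0
    rw [lt_div_iff₀ (by positivity)] at h3
    nlinarith
  have ha2 : a = (2 : ℝ) ^ (-(L : ℝ)) := by
    rw [ha, Real.rpow_neg h2.le, Real.rpow_natCast]; simp
  refine ⟨η / (4 * L), by positivity, fun n => ?_⟩
  have hone : (1 : ℝ) ≤ (2 : ℝ) ^ ((n : ℝ) * η) :=
    Real.one_le_rpow (by norm_num) (by positivity)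
  have hK0 : 0 < ⌊(2 : ℝ) ^ ((n : ℝ) * η)⌋₊ := Nat.floor_pos.2 hone
  refine ⟨⌊(2 : ℝ) ^ ((n : ℝ) * η)⌋₊, hK0, Nat.floor_le (by positivity), ?_⟩
  obtain ⟨c, hc⟩ := exists_colouring
    (fun u v : Fin n → Q => (hammingDist u v : ℝ) ≤ 2 * (η / (4 * L) * n))
    (fun u v h => by rwa [hammingDist_comm]) (fun v => by rw [hammingDist_self]; push_cast; positivity)
    _ hK0 (by
      intro v
      apply Nat.le_floor
      set B := Finset.univ.filter fun u : Fin n → Q =>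
        (hammingDist u v : ℝ) ≤ 2 * (η / (4 * L) * n)
      -- Each point of the ball has weight at least `2 ^ (-n η / 2)`, since `2 ρ L = η / 2`.
      have hb : (B.card : ℝ) * (2 : ℝ) ^ (-(n * (η / 2))) ≤ ((2 : ℝ) ^ (η / 2)) ^ n := by
        calc (B.card : ℝ) * (2 : ℝ) ^ (-(n * (η / 2)))
            = ∑ _u ∈ B, (2 : ℝ) ^ (-(n * (η / 2))) := by simp
          _ ≤ ∑ u ∈ B, a ^ hammingDist u v := by
              refine Finset.sum_le_sum fun u hu => ?_
              have hu' : (hammingDist u v : ℝ) ≤ 2 * (η / (4 * L) * n) := by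
                simpa [B] using hu
              rw [ha2, ← Real.rpow_natCast, ← Real.rpow_mul h2.le]
              refine Real.rpow_le_rpow_of_exponent_le (by norm_num) ?_
              have : 2 * (η / (4 * L) * n) * L = n * (η / 2) := by field_simp; ring
              nlinarith
          _ ≤ ∑ u, a ^ hammingDist u v :=
              Finset.sum_le_sum_of_subset_of_nonneg (Finset.subset_univ _) fun _ _ _ => by positivity
          _ ≤ _ := sum_pow_hammingDist_le n v a hapos.le
          _ ≤ _ := pow_le_pow_left₀ (by positivity) hale n
      rw [Real.rpow_neg h2.le, ← div_eq_mul_inv, div_le_iff₀ (by positivity),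
        ← Real.rpow_natCast, ← Real.rpow_mul h2.le, ← Real.rpow_add h2] at hb
      convert hb using 2
      ring)
  refine ⟨c, fun v k => if H : ∃ u, (hammingDist u v : ℝ) ≤ η / (4 * L) * n ∧ c u = k
    then H.choose else v, fun u v huv => ?_⟩
  have H : ∃ u', (hammingDist u' v : ℝ) ≤ η / (4 * L) * n ∧ c u' = c u := ⟨u, huv, rfl⟩
  simp only [dif_pos H]
  refine hc _ _ ?_ H.choose_spec.2
  have h3 : (hammingDist H.choose u : ℝ) ≤ hammingDist H.choose v + hammingDist u v := by
    rw [hammingDist_comm u v]; exact_mod_cast hammingDist_triangle _ _ _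
  have := H.choose_spec.1
  linarith

/-! ### Expectations under the i.i.d. law -/

/-- Average over the letters of the expectation of a letterwise quantity `F`. -/
def avg [Fintype X] [Fintype Y] (p : X × Y → ℝ) (n : ℕ)
    (F : (Fin n → X × Y) → Fin n → ℝ) : ℝ :=
  (1 / (n : ℝ)) * ∑ i : Fin n, ∑ s : Fin n → X × Y, prodPMF p n s * F s i

/-- Real-valued indicator of a proposition. -/
def ind (P : Prop) : ℝ := if P then 1 else 0

lemma ind_of {P : Prop} (h : P) : ind P = 1 := if_pos h

lemma ind_of_not {P : Prop} (h : ¬ P) : ind P = 0 := if_neg h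

lemma ind_nonneg (P : Prop) : 0 ≤ ind P := by unfold ind; split_ifs <;> norm_num

section Averages

variable [Fintype X] [Fintype Y] {p : X × Y → ℝ}

lemma prodPMF_nonneg (hp : IsPMF p) (n : ℕ) (s : Fin n → X × Y) : 0 ≤ prodPMF p n s :=
  Finset.prod_nonneg fun _ _ => hp.1 _

lemma sum_prodPMF (hp : IsPMF p) (n : ℕ) : ∑ s, prodPMF p n s = 1 := by
  have := Fintype.sum_pow p n
  rw [hp.2, one_pow] at this
  exact this.symm

lemma avg_mono (hp : IsPMF p) {n : ℕ} {F G : (Fin n → X × Y) → Fin n → ℝ}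
    (h : ∀ s i, F s i ≤ G s i) : avg p n F ≤ avg p n G := by
  unfold avg
  refine mul_le_mul_of_nonneg_left ?_ (by positivity)
  exact Finset.sum_le_sum fun i _ => Finset.sum_le_sum fun s _ =>
    mul_le_mul_of_nonneg_left (h s i) (prodPMF_nonneg hp n s)

lemma avg_add {n : ℕ} (F G : (Fin n → X × Y) → Fin n → ℝ) :
    avg p n (fun s i => F s i + G s i) = avg p n F + avg p n G := by
  simp only [avg, mul_add, Finset.sum_add_distrib]

lemma avg_const_mul {n : ℕ} (c : ℝ) (F : (Fin n → X × Y) → Fin n → ℝ) :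
    avg p n (fun s i => c * F s i) = c * avg p n F := by
  simp only [avg, Finset.mul_sum]
  refine Finset.sum_congr rfl fun i _ => Finset.sum_congr rfl fun s _ => ?_
  ring

lemma avg_sum {n : ℕ} {G : Type*} [Fintype G] (F : G → (Fin n → X × Y) → Fin n → ℝ) :
    avg p n (fun s i => ∑ g, F g s i) = ∑ g, avg p n (F g) := by
  simp only [avg, Finset.mul_sum]
  rw [Finset.sum_comm]
  rw [Finset.sum_comm' (t' := Finset.univ) (s' := fun _ => Finset.univ) (by simp)]
  rw [Finset.sum_comm (s := (Finset.univ : Finset G))]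
  refine Finset.sum_congr rfl fun i _ => ?_
  rw [Finset.sum_comm]

lemma avg_nonneg (hp : IsPMF p) {n : ℕ} {F : (Fin n → X × Y) → Fin n → ℝ}
    (h : ∀ s i, 0 ≤ F s i) : 0 ≤ avg p n F := by
  unfold avg
  refine mul_nonneg (by positivity) ?_
  exact Finset.sum_nonneg fun i _ => Finset.sum_nonneg fun s _ =>
    mul_nonneg (prodPMF_nonneg hp n s) (h s i)

lemma avg_one (hp : IsPMF p) {n : ℕ} (hn : 0 < n) : avg p n (fun _ _ => 1) = 1 := by
  have : (n : ℝ) ≠ 0 := by positivity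
  simp [avg, sum_prodPMF hp, this]

lemma pr_nonneg (hp : IsPMF p) {n : ℕ} (E : (Fin n → X × Y) → Prop) :
    0 ≤ pr (prodPMF p n) E :=
  Finset.sum_nonneg fun s _ => by
    split_ifs
    · exact prodPMF_nonneg hp n s
    · exact le_rfl

lemma pr_mono (hp : IsPMF p) {n : ℕ} {E E' : (Fin n → X × Y) → Prop} (h : ∀ s, E s → E' s) :
    pr (prodPMF p n) E ≤ pr (prodPMF p n) E' :=
  Finset.sum_le_sum fun s _ => by
    have := prodPMF_nonneg hp n s
    have := h s
    split_ifs <;> tauto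

/-- For `n = 0` the left side is `0`, by the convention `1 / 0 = 0`. -/
lemma avg_event_le (hp : IsPMF p) {n : ℕ} (E : (Fin n → X × Y) → Prop) :
    avg p n (fun s _ => ind (E s)) ≤ pr (prodPMF p n) E := by
  have h : avg p n (fun s _ => ind (E s))
      = (1 / (n : ℝ)) * (n * pr (prodPMF p n) E) := by
    simp [avg, pr, ind]
  rw [h]
  rcases Nat.eq_zero_or_pos n with h0 | h0
  · simp [h0, pr_nonneg hp]
  · have : (n : ℝ) ≠ 0 := by positivity
    rw [← mul_assoc, one_div, inv_mul_cancel₀ this, one_mul]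

/-- Markov's inequality for the number of positions where two sequences differ. -/
lemma pr_hammingDist_gt_le (hp : IsPMF p) {n : ℕ} (hn : 0 < n) {Q : Type*} [DecidableEq Q]
    (u v : (Fin n → X × Y) → Fin n → Q) {ρ : ℝ} (hρ : 0 < ρ) :
    pr (prodPMF p n) (fun s => ρ * n < (hammingDist (u s) (v s) : ℝ))
      ≤ (1 / ρ) * avg p n (fun s i => ind (u s i ≠ v s i)) := by
  have hn' : (0 : ℝ) < n := by positivity
  have h : (1 / ρ) * avg p n (fun s i => ind (u s i ≠ v s i))
      = ∑ s, prodPMF p n s * ((hammingDist (u s) (v s) : ℝ) / (ρ * n)) := by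
    unfold avg
    rw [Finset.sum_comm, ← mul_assoc, Finset.mul_sum]
    refine Finset.sum_congr rfl fun s _ => ?_
    rw [← Finset.mul_sum]
    have : (hammingDist (u s) (v s) : ℝ) = ∑ i, ind (u s i ≠ v s i) := by
      rw [hammingDist, Finset.card_filter]
      push_cast
      refine Finset.sum_congr rfl fun i _ => ?_
      unfold ind
      split_ifs <;> rfl
    rw [this]
    field_simp
  rw [h]
  refine Finset.sum_le_sum fun s _ => ?_
  have h0 := prodPMF_nonneg hp n s
  split_ifs with hs
  · have : 1 ≤ (hammingDist (u s) (v s) : ℝ) / (ρ * n) := by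
      rw [le_div_iff₀ (by positivity)]; linarith
    nlinarith
  · positivity

/-- Changing a reconstruction only on an event `E` or at positions satisfying `e` costs at most
the maximal distortion times the probabilities involved. -/
lemma avgDist_change_le (hp : IsPMF p) {n : ℕ} {A B : Type*} (f : X × Y → A) (d : A → B → ℝ)
    (D : ℝ) (hd0 : ∀ z w, 0 ≤ d z w) (hD : ∀ q w, d (f q) w ≤ D) (hD0 : 0 ≤ D)
    (w w' : (Fin n → X × Y) → Fin n → B) (E : (Fin n → X × Y) → Prop)
    (e : (Fin n → X × Y) → Fin n → Prop) (h : ∀ s i, w' s i ≠ w s i → E s ∨ e s i) :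
    avgDist p n (fun s i => f (s i)) w' d ≤ avgDist p n (fun s i => f (s i)) w d
      + D * pr (prodPMF p n) E + D * avg p n (fun s i => ind (e s i)) := by
  have h1 : avgDist p n (fun s i => f (s i)) w' d ≤ avg p n (fun s i =>
      d (f (s i)) (w s i) + D * ind (E s) + D * ind (e s i)) := by
    refine avg_mono hp fun s i => ?_
    by_cases hw : w' s i = w s i
    · rw [hw]
      have h2 := mul_nonneg hD0 (ind_nonneg (E s))
      have h3 := mul_nonneg hD0 (ind_nonneg (e s i))
      linarith
    · have h4 := hD (s i) (w' s i)
      have h5 := hd0 (f (s i)) (w s i)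
      rcases h s i hw with h6 | h6
      · have := mul_nonneg hD0 (ind_nonneg (e s i))
        rw [ind_of h6]; linarith
      · have := mul_nonneg hD0 (ind_nonneg (E s))
        rw [ind_of h6]; linarith
  refine h1.trans ?_
  rw [avg_add, avg_add, avg_const_mul, avg_const_mul]
  have := mul_le_mul_of_nonneg_left (avg_event_le hp E) hD0
  have h7 : avg p n (fun s i => d (f (s i)) (w s i)) = avgDist p n (fun s i => f (s i)) w d := rfl
  rw [h7]
  linarith

end Averages

section Constants

lemma exists_upper_bound {ι : Type*} [Finite ι] (f : ι → ℝ) : ∃ D : ℝ, 0 ≤ D ∧ ∀ i, f i ≤ D := by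
  obtain ⟨D, hD⟩ := Set.finite_range f |>.bddAbove
  exact ⟨max D 0, le_max_right _ _, fun i => (hD ⟨i, rfl⟩).trans (le_max_left _ _)⟩

/-- A nonnegative function on a finite set is bounded below by a positive constant where it does
not vanish; `C` is the inverse of that constant. -/
lemma exists_inverse_gap {ι : Type*} [Finite ι] (f : ι → ℝ) (hf : ∀ i, 0 ≤ f i) :
    ∃ C : ℝ, 0 ≤ C ∧ ∀ i, f i ≠ 0 → 1 ≤ C * f i := by
  obtain ⟨C, hC0, hC⟩ := exists_upper_bound fun i => (f i)⁻¹
  refine ⟨C, hC0, fun i hi => ?_⟩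
  have hpos : 0 < f i := lt_of_le_of_ne (hf i) (Ne.symm hi)
  have := mul_le_mul_of_nonneg_right (hC i) hpos.le
  rwa [inv_mul_cancel₀ hi] at this

end Constants

/-! ### At least one round: hashing in the last message -/

/-- Appending to the final message a hash that the final speaker can compute leaves the protocol
valid. For uniformity every message gets a second component, which is trivial before the last
round. -/
lemma validCode_append {t n : ℕ} {k : Fin t → ℕ}
    {msg : (Fin n → X) → (Fin n → Y) → ∀ j : Fin t, Fin (k j)} (hmsg : ValidCode msg)
    {K : ℕ} (c0 : Fin K) (last : Fin t) (hlast : ∀ i, i ≤ last)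
    (H : (Fin n → X) → (Fin n → Y) → Fin K)
    (hA : Even last.val → ∀ x y y', msg x y = msg x y' → H x y = H x y')
    (hB : Odd last.val → ∀ x x' y, msg x y = msg x' y → H x y = H x' y) :
    ValidCode (k := fun j => k j * K)
      (fun x y j => finProdFinEquiv (msg x y j, if j = last then H x y else c0)) := by
  intro j
  refine ⟨fun hj x y y' h => ?_, fun hj x x' y h => ?_⟩
  · have h' : ∀ i, i < j → msg x y i = msg x y' i := fun i hi => by
      have := finProdFinEquiv.injective (h i hi)
      exact (Prod.ext_iff.1 this).1
    have hm := (hmsg j).1 hj x y y' h'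
    simp only [hm]
    by_cases hjl : j = last
    · have : msg x y = msg x y' := by
        funext i
        rcases (hlast i).lt_or_eq with hi | hi
        · exact h' i (hjl ▸ hi)
        · rw [hi, ← hjl]; exact hm
      rw [hA (hjl ▸ hj) x y y' this]
    · simp [hjl]
  · have h' : ∀ i, i < j → msg x y i = msg x' y i := fun i hi => by
      have := finProdFinEquiv.injective (h i hi)
      exact (Prod.ext_iff.1 this).1
    have hm := (hmsg j).2 hj x x' y h'
    simp only [hm]
    by_cases hjl : j = last
    · have : msg x y = msg x' y := by
        funext i
        rcases (hlast i).lt_or_eq with hi | hi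
        · exact h' i (hjl ▸ hi)
        · rw [hi, ← hjl]; exact hm
      rw [hB (hjl ▸ hj) x x' y this]
    · simp [hjl]

/-- With at least one round, small cross distortions can be upgraded to block agreement. The last
speaker hashes its pair of reconstruction sequences into its last message; the other terminal,
whose own pair differs in few positions with high probability, decodes the speaker's pair and adopts
it. -/
lemma achievableCR_succ {X Y ZA ZB HZA HZB : Type*}
    [Fintype X] [Fintype Y] [Fintype HZA] [Fintype HZB]
    (p : X × Y → ℝ) (hp : IsPMF p)
    (fA : X × Y → ZA) (fB : X × Y → ZB)
    (dA : ZA → HZA → ℝ) (dB : ZB → HZB → ℝ)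
    (dAB : HZA → HZA → ℝ) (dBA : HZB → HZB → ℝ)
    (hdA : ∀ z w, 0 ≤ dA z w) (hdB : ∀ z w, 0 ≤ dB z w)
    (hdAB : ∀ z w, 0 ≤ dAB z w) (hdBA : ∀ z w, 0 ≤ dBA z w)
    (hdAB0 : ∀ z w, dAB z w = 0 ↔ z = w) (hdBA0 : ∀ z w, dBA z w = 0 ↔ z = w)
    (t : ℕ) (R : Fin (t + 1) → ℝ) (DA DB : ℝ)
    (hach : Achievable p fA fB dA dB dAB dBA (t + 1) R DA DB 0 0) :
    AchievableCR p fA fB dA dB (t + 1) R DA DB := by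
  intro ε hε
  obtain ⟨D1, hD10, hD1⟩ := exists_upper_bound fun z : (X × Y) × HZA => dA (fA z.1) z.2
  obtain ⟨D2, hD20, hD2⟩ := exists_upper_bound fun z : (X × Y) × HZB => dB (fB z.1) z.2
  obtain ⟨C1, hC10, hC1⟩ := exists_inverse_gap (fun z : HZA × HZA => dAB z.1 z.2)
    fun z => hdAB _ _
  obtain ⟨C2, hC20, hC2⟩ := exists_inverse_gap (fun z : HZB × HZB => dBA z.1 z.2)
    fun z => hdBA _ _
  obtain ⟨ρ, hρ, hhash⟩ := exists_hash (HZA × HZB) (ε / 2) (by positivity)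
  set S : ℝ := (1 + D1 + D2) * ((1 + 1 / ρ) * (C1 + C2)) with hS
  have hS0 : 0 ≤ S := by positivity
  set δ : ℝ := ε / 2 / (1 + S) with hδ
  have hδ0 : 0 < δ := by positivity
  have hδS : δ * (1 + S) = ε / 2 := by rw [hδ]; field_simp
  have hδS' : S * δ ≤ ε / 2 := by nlinarith
  have hδ2 : δ ≤ ε / 2 := by nlinarith
  obtain ⟨N, hN⟩ := hach δ hδ0
  refine ⟨max N 1, fun n hn => ?_⟩
  have hn1 : 0 < n := lt_of_lt_of_le one_pos ((le_max_right _ _).trans hn)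
  obtain ⟨k, msg, gA, gB, ψA, ψB, hval, hk, hdistA, hAB, hdistB, hBA⟩ :=
    hN n ((le_max_left _ _).trans hn)
  obtain ⟨K, hK0, hK, h, dec, hdec⟩ := hhash n
  -- The pairs (reconstruction of `Z_A`, reconstruction of `Z_B`) held by each terminal.
  set PA : (Fin n → X) → (∀ j, Fin (k j)) → Fin n → HZA × HZB :=
    fun x M i => (gA x M i, ψA x M i) with hPA
  set PB : (Fin n → Y) → (∀ j, Fin (k j)) → Fin n → HZA × HZB :=
    fun y M i => (ψB y M i, gB y M i) with hPB
  set u : (Fin n → X × Y) → Fin n → HZA × HZB := fun s => PA (xs s) (msg (xs s) (ys s)) with hu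
  set v : (Fin n → X × Y) → Fin n → HZA × HZB := fun s => PB (ys s) (msg (xs s) (ys s)) with hv
  -- The expected fraction of positions where the two pairs disagree.
  set e := avg p n (fun s i => ind (u s i ≠ v s i)) with he
  have he0 : 0 ≤ e := avg_nonneg hp fun s i => ind_nonneg _
  have hele : e ≤ (C1 + C2) * δ := by
    have h1 : e ≤ avg p n (fun s i =>
        C1 * dAB (gA (xs s) (msg (xs s) (ys s)) i) (ψB (ys s) (msg (xs s) (ys s)) i)
        + C2 * dBA (gB (ys s) (msg (xs s) (ys s)) i) (ψA (xs s) (msg (xs s) (ys s)) i)) := by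
      refine avg_mono hp fun s i => ?_
      have h2 := mul_nonneg hC10
        (hdAB (gA (xs s) (msg (xs s) (ys s)) i) (ψB (ys s) (msg (xs s) (ys s)) i))
      have h3 := mul_nonneg hC20
        (hdBA (gB (ys s) (msg (xs s) (ys s)) i) (ψA (xs s) (msg (xs s) (ys s)) i))
      by_cases hne : u s i ≠ v s i
      · rw [ind_of hne]
        by_cases h4 : gA (xs s) (msg (xs s) (ys s)) i = ψB (ys s) (msg (xs s) (ys s)) i
        · have h5 : gB (ys s) (msg (xs s) (ys s)) i ≠ ψA (xs s) (msg (xs s) (ys s)) i :=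
            fun h5 => hne (Prod.ext h4 h5.symm)
          have := hC2 (_, _) (fun h6 => h5 ((hdBA0 _ _).1 h6))
          simp only at this
          linarith
        · have := hC1 (_, _) (fun h6 => h4 ((hdAB0 _ _).1 h6))
          simp only at this
          linarith
      · rw [ind_of_not hne]; linarith
    rw [avg_add, avg_const_mul, avg_const_mul] at h1
    rw [zero_add] at hAB hBA
    have h2 := mul_le_mul_of_nonneg_left hAB hC10
    have h3 := mul_le_mul_of_nonneg_left hBA hC20
    unfold avgDist at h2 h3
    unfold avg at h1
    linarith
  set fail : (Fin n → X × Y) → Prop := fun s => ρ * n < (hammingDist (u s) (v s) : ℝ) with hfail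
  have hpf0 := pr_nonneg hp fail
  have hpf : pr (prodPMF p n) fail ≤ (1 / ρ) * e := pr_hammingDist_gt_le hp hn1 u v hρ
  have hsum : pr (prodPMF p n) fail + e ≤ (1 + 1 / ρ) * (C1 + C2) * δ := by
    have : (1 + 1 / ρ) * e ≤ (1 + 1 / ρ) * ((C1 + C2) * δ) :=
      mul_le_mul_of_nonneg_left hele (by positivity)
    linarith
  have hbound : (1 + D1 + D2) * (pr (prodPMF p n) fail + e) ≤ ε / 2 := by
    refine le_trans ?_ hδS'
    rw [hS]
    have := mul_le_mul_of_nonneg_left hsum (show 0 ≤ 1 + D1 + D2 by positivity)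
    linarith
  have hpfe0 : 0 ≤ pr (prodPMF p n) fail + e := by linarith
  have hb1 : D1 * pr (prodPMF p n) fail + D1 * e ≤ ε / 2 := by nlinarith
  have hb2 : D2 * pr (prodPMF p n) fail + D2 * e ≤ ε / 2 := by nlinarith
  have hb3 : pr (prodPMF p n) fail ≤ ε := by nlinarith
  have hrate : ∀ j, ((k j * K : ℕ) : ℝ) ≤ (2 : ℝ) ^ ((n : ℝ) * (R j + ε)) := by
    intro j
    have h1 : (k j : ℝ) ≤ (2 : ℝ) ^ ((n : ℝ) * (R j + ε / 2)) :=
      (hk j).trans (Real.rpow_le_rpow_of_exponent_le (by norm_num) (by gcongr))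
    calc ((k j * K : ℕ) : ℝ) = k j * K := by push_cast; ring
      _ ≤ (2 : ℝ) ^ ((n : ℝ) * (R j + ε / 2)) * (2 : ℝ) ^ ((n : ℝ) * (ε / 2)) := by gcongr
      _ = _ := by
        rw [← Real.rpow_add (by norm_num)]
        congr 1
        ring
  have hgood : ∀ s, ¬ fail s → dec (v s) (h (u s)) = u s := fun s hs => hdec _ _ (not_lt.1 hs)
  have hgood' : ∀ s, ¬ fail s → dec (u s) (h (v s)) = v s := fun s hs =>
    hdec _ _ (by rw [hammingDist_comm]; exact not_lt.1 hs)
  set oldM : (∀ j, Fin (k j * K)) → ∀ j, Fin (k j) :=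
    fun M j => (finProdFinEquiv.symm (M j)).1 with holdM
  set hsh : (∀ j, Fin (k j * K)) → Fin K :=
    fun M => (finProdFinEquiv.symm (M (Fin.last t))).2 with hhsh
  -- Rounds are indexed from `0`, so terminal A speaks in the rounds of even index.
  rcases Nat.even_or_odd (Fin.last t).val with hpar | hpar
  · -- A speaks last and B decodes the pair held by A.
    set msg' : (Fin n → X) → (Fin n → Y) → ∀ j, Fin (k j * K) := fun x y j =>
      finProdFinEquiv (msg x y j, if j = Fin.last t then h (PA x (msg x y)) else ⟨0, hK0⟩)
      with hmsg'
    have hold : ∀ x y, oldM (msg' x y) = msg x y := by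
      intro x y; funext j; simp only [holdM, hmsg', Equiv.symm_apply_apply]
    have hhs : ∀ x y, hsh (msg' x y) = h (PA x (msg x y)) := by
      intro x y; simp only [hhsh, hmsg', Equiv.symm_apply_apply, if_true]
    refine ⟨fun j => k j * K, msg', fun x M => gA x (oldM M),
      fun y M i => (dec (PB y (oldM M)) (hsh M) i).2, fun x M => ψA x (oldM M),
      fun y M i => (dec (PB y (oldM M)) (hsh M) i).1,
      validCode_append hval ⟨0, hK0⟩ (Fin.last t) Fin.le_last _
        (fun _ x y y' hm => by rw [hm])
        (fun ho => absurd hpar (Nat.not_even_iff_odd.2 ho)), hrate, ?_, ?_, ?_, ?_⟩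
    · simp only [hold]
      linarith
    · simp only [hold, hhs]
      have := avgDist_change_le hp fB dB D2 hdB (fun q w => hD2 (q, w)) hD20
        (fun s i => gB (ys s) (msg (xs s) (ys s)) i) (fun s i => (dec (v s) (h (u s)) i).2)
        fail (fun s i => u s i ≠ v s i) (fun s i hne => by
          by_contra hcon
          push Not at hcon
          exact hne (by rw [hgood s hcon.1, hcon.2]))
      have h2 : avgDist p n (fun s i => fB (s i)) (fun s i => (dec (v s) (h (u s)) i).2) dB
        ≤ DB + ε := by linarith
      exact h2
    · simp only [hold, hhs]
      refine (pr_mono hp fun s hs => ?_).trans hb3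
      by_contra hcon
      refine hs (funext fun i => ?_)
      have := congrFun (hgood s hcon) i
      exact (Prod.ext_iff.1 this).1
    · simp only [hold, hhs]
      refine (pr_mono hp fun s hs => ?_).trans hb3
      by_contra hcon
      refine hs (funext fun i => ?_)
      have := congrFun (hgood s hcon) i
      exact (Prod.ext_iff.1 this).2.symm
  · -- B speaks last and A decodes the pair held by B.
    set msg' : (Fin n → X) → (Fin n → Y) → ∀ j, Fin (k j * K) := fun x y j =>
      finProdFinEquiv (msg x y j, if j = Fin.last t then h (PB y (msg x y)) else ⟨0, hK0⟩)
      with hmsg'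
    have hold : ∀ x y, oldM (msg' x y) = msg x y := by
      intro x y; funext j; simp only [holdM, hmsg', Equiv.symm_apply_apply]
    have hhs : ∀ x y, hsh (msg' x y) = h (PB y (msg x y)) := by
      intro x y; simp only [hhsh, hmsg', Equiv.symm_apply_apply, if_true]
    refine ⟨fun j => k j * K, msg', fun x M i => (dec (PA x (oldM M)) (hsh M) i).1,
      fun y M => gB y (oldM M), fun x M i => (dec (PA x (oldM M)) (hsh M) i).2,
      fun y M => ψB y (oldM M),
      validCode_append hval ⟨0, hK0⟩ (Fin.last t) Fin.le_last _
        (fun ho => absurd ho (Nat.not_even_iff_odd.2 hpar))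
        (fun _ x x' y hm => by rw [hm]), hrate, ?_, ?_, ?_, ?_⟩
    · simp only [hold, hhs]
      have := avgDist_change_le hp fA dA D1 hdA (fun q w => hD1 (q, w)) hD10
        (fun s i => gA (xs s) (msg (xs s) (ys s)) i) (fun s i => (dec (u s) (h (v s)) i).1)
        fail (fun s i => u s i ≠ v s i) (fun s i hne => by
          by_contra hcon
          push Not at hcon
          exact hne (by rw [hgood' s hcon.1, ← hcon.2]))
      have h2 : avgDist p n (fun s i => fA (s i)) (fun s i => (dec (u s) (h (v s)) i).1) dA
        ≤ DA + ε := by linarith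
      exact h2
    · simp only [hold]
      linarith
    · simp only [hold, hhs]
      refine (pr_mono hp fun s hs => ?_).trans hb3
      by_contra hcon
      refine hs (funext fun i => ?_)
      have := congrFun (hgood' s hcon) i
      exact (Prod.ext_iff.1 this).1.symm
    · simp only [hold, hhs]
      refine (pr_mono hp fun s hs => ?_).trans hb3
      by_contra hcon
      refine hs (funext fun i => ?_)
      have := congrFun (hgood' s hcon) i
      exact (Prod.ext_iff.1 this).2

/-! ### No communication: freezing letters and time sharing -/

section NoCommunication

variable [Fintype X] [Fintype Y] {p : X × Y → ℝ}

/-- Replacing letter `i` by an independent copy does not change the i.i.d. law. -/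
lemma sum_prodPMF_resample (hp : IsPMF p) {n : ℕ} (i : Fin n) (F : (Fin n → X × Y) → ℝ) :
    ∑ s, prodPMF p n s * F s
      = ∑ s, prodPMF p n s * ∑ q, p q * F (Function.update s i q) := by
  -- The involution exchanging letter `i` of the sequence with the independent copy.
  let σ : (Fin n → X × Y) × (X × Y) ≃ (Fin n → X × Y) × (X × Y) :=
    { toFun := fun z => (Function.update z.1 i z.2, z.1 i)
      invFun := fun z => (Function.update z.1 i z.2, z.1 i)
      left_inv := fun z => by simp
      right_inv := fun z => by simp }
  have hσ : ∀ z : (Fin n → X × Y) × (X × Y),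
      prodPMF p n (σ z).1 * p (σ z).2 = prodPMF p n z.1 * p z.2 := by
    rintro ⟨s, q⟩
    change (∏ j, p (Function.update s i q j)) * p (s i) = (∏ j, p (s j)) * p q
    rw [← Finset.mul_prod_erase _ _ (Finset.mem_univ i),
      ← Finset.mul_prod_erase Finset.univ (fun j => p (s j)) (Finset.mem_univ i)]
    have : ∏ j ∈ Finset.univ.erase i, p (Function.update s i q j)
        = ∏ j ∈ Finset.univ.erase i, p (s j) :=
      Finset.prod_congr rfl fun j hj => by
        rw [Function.update_of_ne (Finset.ne_of_mem_erase hj)]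
    rw [this, Function.update_self]
    ring
  calc ∑ s, prodPMF p n s * F s
      = ∑ z : (Fin n → X × Y) × (X × Y), prodPMF p n z.1 * p z.2 * F z.1 := by
        rw [Fintype.sum_prod_type]
        refine Finset.sum_congr rfl fun s _ => ?_
        simp only
        rw [← Finset.sum_mul, ← Finset.mul_sum, hp.2, mul_one]
    _ = ∑ z : (Fin n → X × Y) × (X × Y), prodPMF p n (σ z).1 * p (σ z).2 * F (σ z).1 :=
        (Equiv.sum_comp σ fun z => prodPMF p n z.1 * p z.2 * F z.1).symm
    _ = ∑ z : (Fin n → X × Y) × (X × Y),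
          prodPMF p n z.1 * p z.2 * F (Function.update z.1 i z.2) :=
        Finset.sum_congr rfl fun z _ => by rw [hσ]; rfl
    _ = _ := by
        rw [Fintype.sum_prod_type]
        refine Finset.sum_congr rfl fun s _ => ?_
        simp only [Finset.mul_sum, mul_assoc]

/-- Conditioning on all letters but the `i`-th: the average splits into single-letter expectations,
one for each position and each choice of the frozen letters. -/
lemma avg_resample (hp : IsPMF p) {n : ℕ} (F : (Fin n → X × Y) → Fin n → ℝ) :
    avg p n F = avg p n (fun s i => ∑ q, p q * F (Function.update s i q) i) := by
  unfold avg
  congr 1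
  exact Finset.sum_congr rfl fun i _ => sum_prodPMF_resample hp i fun s => F s i

lemma sum_prodPMF_marginal (hp : IsPMF p) {n : ℕ} (i : Fin n) (φ : X × Y → ℝ) :
    ∑ s, prodPMF p n s * φ (s i) = ∑ q, p q * φ q := by
  rw [sum_prodPMF_resample hp i fun s => φ (s i)]
  simp only [Function.update_self]
  rw [← Finset.sum_mul, sum_prodPMF hp, one_mul]

/-- Deterministic time sharing: a probability vector `w` on a finite set is approximated by a
sequence of length `n` up to an additive error independent of `n`. Position counts are
`⌊n w g⌋`, and the at most `card G` leftover positions are filled arbitrarily. -/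
lemma exists_time_sharing {G : Type*} [Fintype G] [Nonempty G] (w : G → ℝ) (hw : ∀ g, 0 ≤ w g)
    (hw1 : ∑ g, w g = 1) (n : ℕ) :
    ∃ a : Fin n → G, ∀ (L : G → ℝ) (D : ℝ), (∀ g, 0 ≤ L g) → (∀ g, L g ≤ D) → 0 ≤ D →
      ∑ j, L (a j) ≤ n * ∑ g, w g * L g + D * Fintype.card G := by
  set m : G → ℕ := fun g => ⌊(n : ℝ) * w g⌋₊ with hm
  have hmle : ∀ g, (m g : ℝ) ≤ n * w g := fun g =>
    Nat.floor_le (mul_nonneg (Nat.cast_nonneg n) (hw g))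
  have hmge : ∀ g, (n : ℝ) * w g ≤ m g + 1 := fun g => (Nat.lt_floor_add_one _).le
  have hsum : ∑ g, m g ≤ n := by
    have : ((∑ g, m g : ℕ) : ℝ) ≤ n := by
      push_cast
      calc _ ≤ ∑ g, (n : ℝ) * w g := Finset.sum_le_sum fun g _ => hmle g
        _ = n := by rw [← Finset.mul_sum, hw1, mul_one]
    exact_mod_cast this
  obtain ⟨e⟩ : Nonempty ((Σ g, Fin (m g)) ↪ Fin n) :=
    Function.Embedding.nonempty_of_card_le (by simpa using hsum)
  let g0 : G := Classical.arbitrary G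
  let a : Fin n → G := fun j => if H : ∃ z, e z = j then H.choose.1 else g0
  have ha : ∀ z, a (e z) = z.1 := by
    intro z
    have H : ∃ z', e z' = e z := ⟨z, rfl⟩
    have : H.choose = z := e.injective H.choose_spec
    simp only [a, dif_pos H]
    rw [this]
  refine ⟨a, fun L D hL0 hLD hD0 => ?_⟩
  rw [← Finset.sum_add_sum_compl (Finset.univ.map e) fun j => L (a j)]
  have h1 : ∑ j ∈ Finset.univ.map e, L (a j) ≤ n * ∑ g, w g * L g := by
    rw [Finset.sum_map]
    simp only [ha]
    rw [Fintype.sum_sigma, Finset.mul_sum]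
    refine Finset.sum_le_sum fun g _ => ?_
    simp only [Finset.sum_const, Finset.card_univ, Fintype.card_fin, nsmul_eq_mul]
    rw [← mul_assoc]
    exact mul_le_mul_of_nonneg_right (hmle g) (hL0 g)
  have h2 : ∑ j ∈ (Finset.univ.map e)ᶜ, L (a j) ≤ D * Fintype.card G := by
    have h3 : (((Finset.univ.map e)ᶜ.card : ℕ) : ℝ) ≤ Fintype.card G := by
      rw [Finset.card_compl, Finset.card_map, Finset.card_univ, Fintype.card_sigma]
      simp only [Fintype.card_fin]
      rw [Nat.cast_sub hsum]
      push_cast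
      have : (n : ℝ) ≤ ∑ g, ((m g : ℝ) + 1) := by
        calc (n : ℝ) = ∑ g, (n : ℝ) * w g := by rw [← Finset.mul_sum, hw1, mul_one]
          _ ≤ _ := Finset.sum_le_sum fun g _ => hmge g
      rw [Finset.sum_add_distrib] at this
      simp at this
      linarith
    calc _ ≤ ∑ _j ∈ (Finset.univ.map e)ᶜ, D := Finset.sum_le_sum fun j _ => hLD _
      _ = ((Finset.univ.map e)ᶜ.card : ℕ) * D := by simp
      _ ≤ _ := by rw [mul_comm]; exact mul_le_mul_of_nonneg_left h3 hD0
  linarith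

/-- A sum weighted by the empirical law of a letterwise quantity `τ` is an average. -/
lemma sum_avg_ind_mul {n : ℕ} {G : Type*} [Fintype G] (τ : (Fin n → X × Y) → Fin n → G)
    (L : G → ℝ) :
    ∑ g, avg p n (fun s i => ind (τ s i = g)) * L g = avg p n (fun s i => L (τ s i)) := by
  have h : (fun s i => L (τ s i)) = fun s i => ∑ g, L g * ind (τ s i = g) := by
    funext s i
    simp [ind]
  rw [h, avg_sum]
  refine Finset.sum_congr rfl fun g _ => ?_
  rw [avg_const_mul, mul_comm]

end NoCommunication

/-- Without communication a code is a mixture of single-letter tuples of maps. There are finitely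
many of these, so the ones that disagree with positive probability do so with probability bounded
below and have little weight in a code with small cross distortions. Replacing them by a tuple that
agrees almost surely and time sharing over positions gives a code that agrees almost surely. -/
lemma achievableCR_zero {X Y ZA ZB HZA HZB : Type*}
    [Fintype X] [Fintype Y] [Fintype HZA] [Fintype HZB]
    (p : X × Y → ℝ) (hp : IsPMF p)
    (fA : X × Y → ZA) (fB : X × Y → ZB)
    (dA : ZA → HZA → ℝ) (dB : ZB → HZB → ℝ)
    (dAB : HZA → HZA → ℝ) (dBA : HZB → HZB → ℝ)
    (hdA : ∀ z w, 0 ≤ dA z w) (hdB : ∀ z w, 0 ≤ dB z w)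
    (hdAB : ∀ z w, 0 ≤ dAB z w) (hdBA : ∀ z w, 0 ≤ dBA z w)
    (hdAB0 : ∀ z w, dAB z w = 0 ↔ z = w) (hdBA0 : ∀ z w, dBA z w = 0 ↔ z = w)
    (R : Fin 0 → ℝ) (DA DB : ℝ)
    (hach : Achievable p fA fB dA dB dAB dBA 0 R DA DB 0 0) :
    AchievableCR p fA fB dA dB 0 R DA DB := by
  intro ε hε
  -- Single-letter maps `(g_A, g_B, ψ_A, ψ_B)` and their expected distortions.
  let T := (X → HZA) × (Y → HZB) × (X → HZB) × (Y → HZA)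
  let LA : T → ℝ := fun τ => ∑ q, p q * dA (fA q) (τ.1 q.1)
  let LB : T → ℝ := fun τ => ∑ q, p q * dB (fB q) (τ.2.1 q.2)
  let LAB : T → ℝ := fun τ => ∑ q, p q * dAB (τ.1 q.1) (τ.2.2.2 q.2)
  let LBA : T → ℝ := fun τ => ∑ q, p q * dBA (τ.2.1 q.2) (τ.2.2.1 q.1)
  let J : T → ℝ := fun τ => LAB τ + LBA τ
  have hLA0 : ∀ τ, 0 ≤ LA τ := fun τ =>
    Finset.sum_nonneg fun q _ => mul_nonneg (hp.1 q) (hdA _ _)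
  have hLB0 : ∀ τ, 0 ≤ LB τ := fun τ =>
    Finset.sum_nonneg fun q _ => mul_nonneg (hp.1 q) (hdB _ _)
  have hLAB0 : ∀ τ, 0 ≤ LAB τ := fun τ =>
    Finset.sum_nonneg fun q _ => mul_nonneg (hp.1 q) (hdAB _ _)
  have hLBA0 : ∀ τ, 0 ≤ LBA τ := fun τ =>
    Finset.sum_nonneg fun q _ => mul_nonneg (hp.1 q) (hdBA _ _)
  have hJ0 : ∀ τ, 0 ≤ J τ := fun τ => add_nonneg (hLAB0 τ) (hLBA0 τ)
  obtain ⟨D1, hD10, hD1⟩ := exists_upper_bound LA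
  obtain ⟨D2, hD20, hD2⟩ := exists_upper_bound LB
  obtain ⟨C, hC0, hC⟩ := exists_inverse_gap J hJ0
  set S : ℝ := (1 + D1 + D2) * (2 * C) with hS
  have hS0 : 0 ≤ S := by positivity
  set δ : ℝ := min (ε / 2) (1 / 2) / (1 + S) with hδ
  have hmin : 0 < min (ε / 2) (1 / 2) := lt_min (by positivity) (by norm_num)
  have hδ0 : 0 < δ := by positivity
  have hδS : δ + δ * S = min (ε / 2) (1 / 2) := by rw [hδ]; field_simp
  have hδε : δ + δ * S ≤ ε / 2 := hδS ▸ min_le_left _ _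
  have hδ1 : δ + δ * S ≤ 1 / 2 := hδS ▸ min_le_right _ _
  have hDC1 : 0 ≤ D1 * C * δ := by positivity
  have hDC2 : 0 ≤ D2 * C * δ := by positivity
  have hC' : 0 ≤ C * δ := by positivity
  obtain ⟨N, hN⟩ := hach δ hδ0
  set m := max N 1
  have hm0 : 0 < m := lt_of_lt_of_le one_pos (le_max_right _ _)
  obtain ⟨k, msg, gA, gB, ψA, ψB, -, -, hdistA, hAB, hdistB, hBA⟩ := hN m (le_max_left _ _)
  let M : ∀ j : Fin 0, Fin (k j) := fun j => j.elim0
  have hM : ∀ x y, msg x y = M := fun x y => funext fun j => j.elim0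
  simp only [hM, zero_add] at hdistA hAB hdistB hBA
  -- The maps seen by letter `i` when all other letters are frozen to those of `s`.
  let τ : (Fin m → X × Y) → Fin m → T := fun s i =>
    (fun x => gA (Function.update (xs s) i x) M i, fun y => gB (Function.update (ys s) i y) M i,
      fun x => ψA (Function.update (xs s) i x) M i, fun y => ψB (Function.update (ys s) i y) M i)
  have hxs : ∀ (s : Fin m → X × Y) i q,
      xs (Function.update s i q) = Function.update (xs s) i q.1 := by
    intro s i q; funext j
    by_cases hj : j = i
    · subst hj; simp [xs]
    · simp [xs, Function.update_of_ne hj]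
  have hys : ∀ (s : Fin m → X × Y) i q,
      ys (Function.update s i q) = Function.update (ys s) i q.2 := by
    intro s i q; funext j
    by_cases hj : j = i
    · subst hj; simp [ys]
    · simp [ys, Function.update_of_ne hj]
  have hA' : avg p m (fun s i => LA (τ s i)) ≤ DA + δ := by
    refine le_trans (le_of_eq ?_) hdistA
    symm
    refine (avg_resample hp _).trans ?_
    simp only [hxs, Function.update_self]
    rfl
  have hB' : avg p m (fun s i => LB (τ s i)) ≤ DB + δ := by
    refine le_trans (le_of_eq ?_) hdistB
    symm
    refine (avg_resample hp _).trans ?_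
    simp only [hys, Function.update_self]
    rfl
  have hAB' : avg p m (fun s i => LAB (τ s i)) ≤ δ := by
    refine le_trans (le_of_eq ?_) hAB
    symm
    refine (avg_resample hp _).trans ?_
    simp only [hxs, hys]
    rfl
  have hBA' : avg p m (fun s i => LBA (τ s i)) ≤ δ := by
    refine le_trans (le_of_eq ?_) hBA
    symm
    refine (avg_resample hp _).trans ?_
    simp only [hxs, hys]
    rfl
  have hJ' : avg p m (fun s i => J (τ s i)) ≤ 2 * δ := by
    have : avg p m (fun s i => J (τ s i)) = _ :=
      avg_add (fun s i => LAB (τ s i)) (fun s i => LBA (τ s i))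
    linarith
  have hCJ : C * avg p m (fun s i => J (τ s i)) ≤ 2 * C * δ := by
    have := mul_le_mul_of_nonneg_left hJ' hC0
    linarith
  -- If every tuple had positive disagreement, the average disagreement could not be small.
  have hexists : ∃ τ0, J τ0 = 0 := by
    by_contra hcon
    push Not at hcon
    have h1 : avg p m (fun _ _ => 1) ≤ avg p m (fun s i => C * J (τ s i)) :=
      avg_mono hp fun s i => hC _ (hcon _)
    rw [avg_one hp hm0, avg_const_mul] at h1
    have : δ * S = 2 * (C * δ) + 2 * (D1 * C * δ) + 2 * (D2 * C * δ) := by rw [hS]; ring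
    linarith
  obtain ⟨τ0, hτ0⟩ := hexists
  let G := {τ : T // J τ = 0}
  haveI : Nonempty G := ⟨⟨τ0, hτ0⟩⟩
  let τ' : (Fin m → X × Y) → Fin m → G := fun s i =>
    if H : J (τ s i) = 0 then ⟨τ s i, H⟩ else ⟨τ0, hτ0⟩
  have hτ' : ∀ (L : T → ℝ) (D : ℝ), (∀ t, 0 ≤ L t) → (∀ t, L t ≤ D) → 0 ≤ D →
      avg p m (fun s i => L (τ' s i).1) ≤ avg p m (fun s i => L (τ s i)) + D * (2 * C * δ) := by
    intro L D hL0 hLD hD0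
    have h1 : avg p m (fun s i => L (τ' s i).1)
        ≤ avg p m (fun s i => L (τ s i) + D * (C * J (τ s i))) := by
      refine avg_mono hp fun s i => ?_
      by_cases H : J (τ s i) = 0
      · simp [τ', H]
      · have h2 := hLD (τ' s i).1
        have h3 := hL0 (τ s i)
        have h4 := mul_le_mul_of_nonneg_left (hC _ H) hD0
        linarith
    rw [avg_add, avg_const_mul, avg_const_mul] at h1
    have := mul_le_mul_of_nonneg_left hCJ hD0
    linarith
  have hA'' := hτ' LA D1 hLA0 hD1 hD10
  have hB'' := hτ' LB D2 hLB0 hD2 hD20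
  -- The weights of the agreeing tuples, to be used as time-sharing fractions.
  let w : G → ℝ := fun g => avg p m (fun s i => ind (τ' s i = g))
  have hw0 : ∀ g, 0 ≤ w g := fun g => avg_nonneg hp fun _ _ => ind_nonneg _
  have hw1 : ∑ g, w g = 1 := by
    have := sum_avg_ind_mul (p := p) τ' (fun _ => 1)
    rw [avg_one hp hm0] at this
    simpa [w] using this
  obtain ⟨N', hN'⟩ := exists_nat_gt ((D1 + D2) * Fintype.card G / (ε / 2))
  refine ⟨max N' 1, fun n hn => ?_⟩
  have hn0 : 0 < n := lt_of_lt_of_le one_pos ((le_max_right _ _).trans hn)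
  have hnR : (0 : ℝ) < n := by positivity
  have hnbig : (D1 + D2) * Fintype.card G ≤ ε / 2 * n := by
    have h1 : (N' : ℝ) ≤ n := by exact_mod_cast (le_max_left _ _).trans hn
    rw [div_lt_iff₀ (by positivity)] at hN'
    nlinarith
  obtain ⟨a, ha⟩ := exists_time_sharing w hw0 hw1 n
  have hfinal : ∀ (L : T → ℝ) (D : ℝ) (B : ℝ), (∀ t, 0 ≤ L t) → (∀ t, L t ≤ D) → 0 ≤ D →
      D ≤ D1 + D2 → avg p m (fun s i => L (τ' s i).1) ≤ B + ε / 2 →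
      (1 / (n : ℝ)) * ∑ j, L (a j).1 ≤ B + ε := by
    intro L D B hL0 hLD hD0 hDD hB
    have h1 := ha (fun g => L g.1) D (fun g => hL0 _) (fun g => hLD _) hD0
    have h2 : ∑ g, w g * L g.1 = avg p m (fun s i => L (τ' s i).1) :=
      sum_avg_ind_mul (p := p) τ' (fun g => L g.1)
    rw [h2] at h1
    have h3 : D * Fintype.card G ≤ (D1 + D2) * Fintype.card G :=
      mul_le_mul_of_nonneg_right hDD (Nat.cast_nonneg _)
    have h4 := mul_le_mul_of_nonneg_left hB hnR.le
    rw [one_div, inv_mul_le_iff₀ hnR]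
    linarith
  have hδS2 : δ * S = 2 * (C * δ) + 2 * (D1 * C * δ) + 2 * (D2 * C * δ) := by rw [hS]; ring
  have hzero : ∀ s : Fin n → X × Y, prodPMF p n s ≠ 0 → ∀ i, p (s i) ≠ 0 := fun s hs i h0 =>
    hs (Finset.prod_eq_zero (Finset.mem_univ i) h0)
  refine ⟨fun j => j.elim0, fun _ _ j => j.elim0, fun x _ i => (a i).1.1 (x i),
    fun y _ i => (a i).1.2.1 (y i), fun x _ i => (a i).1.2.2.1 (x i),
    fun y _ i => (a i).1.2.2.2 (y i), fun j => j.elim0, fun j => j.elim0, ?_, ?_, ?_, ?_⟩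
  · refine le_trans (le_of_eq ?_) (hfinal LA D1 DA hLA0 hD1 hD10 (by linarith) (by linarith))
    unfold avgDist
    congr 1
    exact Finset.sum_congr rfl fun i _ =>
      sum_prodPMF_marginal hp i fun q => dA (fA q) ((a i).1.1 q.1)
  · refine le_trans (le_of_eq ?_) (hfinal LB D2 DB hLB0 hD2 hD20 (by linarith) (by linarith))
    unfold avgDist
    congr 1
    exact Finset.sum_congr rfl fun i _ =>
      sum_prodPMF_marginal hp i fun q => dB (fB q) ((a i).1.2.1 q.2)
  · refine le_trans (le_of_eq (Finset.sum_eq_zero fun s _ => ?_)) hε.le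
    split_ifs with hs
    · by_contra hne
      refine hs (funext fun i => ?_)
      have h1 : LAB (a i).1 = 0 := by
        have := (a i).2; have := hLAB0 (a i).1; have := hLBA0 (a i).1
        simp only [J] at *; linarith
      have h2 := (Finset.sum_eq_zero_iff_of_nonneg fun q _ =>
        mul_nonneg (hp.1 q) (hdAB _ _)).1 h1 (s i) (Finset.mem_univ _)
      exact ((hdAB0 _ _).1 ((mul_eq_zero.1 h2).resolve_left (hzero s hne i))).symm
    · rfl
  · refine le_trans (le_of_eq (Finset.sum_eq_zero fun s _ => ?_)) hε.le
    split_ifs with hs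
    · by_contra hne
      refine hs (funext fun i => ?_)
      have h1 : LBA (a i).1 = 0 := by
        have := (a i).2; have := hLAB0 (a i).1; have := hLBA0 (a i).1
        simp only [J] at *; linarith
      have h2 := (Finset.sum_eq_zero_iff_of_nonneg fun q _ =>
        mul_nonneg (hp.1 q) (hdBA _ _)).1 h1 (s i) (Finset.mem_univ _)
      exact ((hdBA0 _ _).1 ((mul_eq_zero.1 h2).resolve_left (hzero s hne i))).symm
    · rfl

/-! ### From block agreement to zero cross distortion -/

/-- A block disagreement probability `π` bounds the cross distortion by `π` times the maximal
distortion. -/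
lemma avgDist_le_of_pr_ne [Fintype X] [Fintype Y] {p : X × Y → ℝ} (hp : IsPMF p) {n : ℕ}
    {B : Type*} (d : B → B → ℝ) (D : ℝ) (hD0 : 0 ≤ D) (hD : ∀ z w, d z w ≤ D)
    (hd : ∀ z, d z z = 0) (v w : (Fin n → X × Y) → Fin n → B) :
    avgDist p n v w d ≤ D * pr (prodPMF p n) (fun s => w s ≠ v s) := by
  have h1 : avgDist p n v w d ≤ avg p n (fun s _ => D * ind (w s ≠ v s)) := by
    refine avg_mono hp fun s i => ?_
    by_cases h : w s = v s
    · rw [h, hd]; exact mul_nonneg hD0 (ind_nonneg _)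
    · rw [ind_of h, mul_one]; exact hD _ _
  rw [avg_const_mul] at h1
  exact h1.trans (mul_le_mul_of_nonneg_left (avg_event_le hp _) hD0)

lemma achievable_of_achievableCR {X Y ZA ZB HZA HZB : Type*}
    [Fintype X] [Fintype Y] [Fintype HZA] [Fintype HZB]
    (p : X × Y → ℝ) (hp : IsPMF p)
    (fA : X × Y → ZA) (fB : X × Y → ZB)
    (dA : ZA → HZA → ℝ) (dB : ZB → HZB → ℝ)
    (dAB : HZA → HZA → ℝ) (dBA : HZB → HZB → ℝ)
    (hdAB0 : ∀ z w, dAB z w = 0 ↔ z = w) (hdBA0 : ∀ z w, dBA z w = 0 ↔ z = w)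
    (t : ℕ) (R : Fin t → ℝ) (DA DB : ℝ) (hCR : AchievableCR p fA fB dA dB t R DA DB) :
    Achievable p fA fB dA dB dAB dBA t R DA DB 0 0 := by
  intro ε hε
  obtain ⟨D1, hD10, hD1⟩ := exists_upper_bound fun z : HZA × HZA => dAB z.1 z.2
  obtain ⟨D2, hD20, hD2⟩ := exists_upper_bound fun z : HZB × HZB => dBA z.1 z.2
  set δ := ε / (1 + D1 + D2) with hδ
  have hδ0 : 0 < δ := by positivity
  have hδ1 : δ + D1 * δ + D2 * δ = ε := by rw [hδ]; field_simp
  have h1 : 0 ≤ D1 * δ := by positivity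
  have h2 : 0 ≤ D2 * δ := by positivity
  obtain ⟨N, hN⟩ := hCR δ hδ0
  refine ⟨N, fun n hn => ?_⟩
  obtain ⟨k, msg, gA, gB, ψA, ψB, hval, hk, hA, hB, hAB, hBA⟩ := hN n hn
  refine ⟨k, msg, gA, gB, ψA, ψB, hval, fun j => (hk j).trans ?_, by linarith, ?_,
    by linarith, ?_⟩
  · refine Real.rpow_le_rpow_of_exponent_le (by norm_num) ?_
    gcongr
    linarith
  · have h3 := avgDist_le_of_pr_ne hp dAB D1 hD10 (fun z w => hD1 (z, w))
      (fun z => (hdAB0 z z).2 rfl) (fun s i => gA (xs s) (msg (xs s) (ys s)) i)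
      (fun s i => ψB (ys s) (msg (xs s) (ys s)) i)
    have h4 := mul_le_mul_of_nonneg_left hAB hD10
    linarith
  · have h3 := avgDist_le_of_pr_ne hp dBA D2 hD20 (fun z w => hD2 (z, w))
      (fun z => (hdBA0 z z).2 rfl) (fun s i => gB (ys s) (msg (xs s) (ys s)) i)
      (fun s i => ψA (xs s) (msg (xs s) (ys s)) i)
    have h4 := mul_le_mul_of_nonneg_left hBA hD20
    linarith

/-- **Corollary 1, first part.** If the cross-reconstruction distortion measures `d_AB` and
`d_BA` are nonnegative and vanish exactly on the diagonal, and the reconstruction alphabets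
satisfy `𝒵̂_A = 𝒲̂_B` and `𝒵̂_B = 𝒲̂_A`, then the common-reconstruction rate-distortion
region equals the constrained-reconstruction region at zero cross distortions:
`𝓡_CR^{(t)}(D_A, D_B) = 𝓡^{(t)}(D_A, D_B, 0, 0)`. -/
theorem corollary1_common_reconstruction
    {X Y ZA ZB HZA HZB : Type*}
    [Fintype X] [Fintype Y] [Fintype HZA] [Fintype HZB]
    (p : X × Y → ℝ) (hp : IsPMF p)
    (fA : X × Y → ZA) (fB : X × Y → ZB)
    (dA : ZA → HZA → ℝ) (dB : ZB → HZB → ℝ)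
    (dAB : HZA → HZA → ℝ) (dBA : HZB → HZB → ℝ)
    (hdA : ∀ z w, 0 ≤ dA z w) (hdB : ∀ z w, 0 ≤ dB z w)
    (hdAB : ∀ z w, 0 ≤ dAB z w) (hdBA : ∀ z w, 0 ≤ dBA z w)
    (hdAB0 : ∀ z w, dAB z w = 0 ↔ z = w) (hdBA0 : ∀ z w, dBA z w = 0 ↔ z = w)
    (t : ℕ) (R : Fin t → ℝ) (DA DB : ℝ) :
    AchievableCR p fA fB dA dB t R DA DB ↔
      Achievable p fA fB dA dB dAB dBA t R DA DB 0 0 := by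
  constructor
  · exact achievable_of_achievableCR p hp fA fB dA dB dAB dBA hdAB0 hdBA0 t R DA DB
  · intro hach
    cases t with
    | zero =>
      exact achievableCR_zero p hp fA fB dA dB dAB dBA hdA hdB hdAB hdBA hdAB0 hdBA0 R DA DB hach
    | succ t =>
      exact achievableCR_succ p hp fA fB dA dB dAB dBA hdA hdB hdAB hdBA hdAB0 hdBA0 t R DA DB
        hach

end IFC

end
end

section
/- Interaction never requires more sum rate than one-way communication with common reconstruction: For all σ_X², σ_V² > 0 and all D with 0 < D < σ_X², the minimal interactive sum rate satisfies R*_sum(D) ≤ R_CR(D), i.e., there exist reals κ_x, κ_y with κ_x² < D σ_X² and κ_y² < D σ_Y² such that max{ (1/2)log₂(σ_X² σ_V² / (D σ_Y² − κ_y²)), (1/2)log₂((σ_X² σ_V²/σ_Y²)·(D + σ_X² − 2κ_x)/(D σ_X² − κ_x²)), 0 } + max{ (1/2)log₂(σ_V² D / (D σ_Y² − κ_y²)), 0 } ≤ R_CR(D). Equivalently, R*_sum(D)/R_CR(D) ≤ 1 on this range (where R_CR(D) > 0). -/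
/-!
The parameters `κx = D`, `κy = 0` suffice. They turn both forward terms into
`½ log₂(σX²σV² / (D σY²))`, which is at most `R_CR(D) = ½ log₂(σX²(D + σV²) / (D σY²))`, and the
backward term into `½ log₂(σV² / σY²) < 0`, whose positive part vanishes. The bound on the infimum
follows because `F ≥ 0`, being a sum of positive parts.
-/

noncomputable section

namespace IFCR

/-- Steinberg's one-way common-reconstruction rate-distortion function for estimating `X` at
terminal B with side information `Y = X + V`:
`R_CR(D) = ½ log₂( (σX²/(σX²+σV²)) · ((D+σV²)/D) )`. -/
def RCR (σX2 σV2 D : ℝ) : ℝ :=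
  (1 / 2) * Real.logb 2 ((σX2 / (σX2 + σV2)) * ((D + σV2) / D))

/-- The interactive sum-rate bound `F(D, κx, κy)` for computing `f_A ≡ c` and `f_B = X`:
the sum of the positive parts of the forward bound
`max{ ½log₂(σX²σV²/(DσY²−κy²)), ½log₂((σX²σV²/σY²)·(D+σX²−2κx)/(DσX²−κx²)) }`
and the backward bound `½log₂(σV²D/(DσY²−κy²))`, where `σY² = σX² + σV²`. -/
def Fsum (σX2 σV2 D κx κy : ℝ) : ℝ :=
  max (max ((1 / 2) * Real.logb 2 (σX2 * σV2 / (D * (σX2 + σV2) - κy ^ 2)))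
        ((1 / 2) * Real.logb 2
          ((σX2 * σV2 / (σX2 + σV2)) * ((D + σX2 - 2 * κx) / (D * σX2 - κx ^ 2))))) 0
    + max ((1 / 2) * Real.logb 2 (σV2 * D / (D * (σX2 + σV2) - κy ^ 2))) 0

/-- The minimal interactive sum rate `R*_sum(D)`: the infimum of `F(D, κx, κy)` over all
admissible parameters `κx² < D σX²`, `κy² < D σY²`. -/
def RstarSum (σX2 σV2 D : ℝ) : ℝ :=
  sInf {r : ℝ | ∃ κx κy : ℝ, κx ^ 2 < D * σX2 ∧ κy ^ 2 < D * (σX2 + σV2) ∧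
    r = Fsum σX2 σV2 D κx κy}

theorem RCR_pos {σX2 σV2 D : ℝ} (hσX : 0 < σX2) (hσV : 0 < σV2) (hD0 : 0 < D) (hD : D < σX2) :
    0 < RCR σX2 σV2 D := by
  unfold RCR
  have h : 1 < (σX2 / (σX2 + σV2)) * ((D + σV2) / D) := by
    rw [div_mul_div_comm, one_lt_div (by positivity)]
    nlinarith [mul_lt_mul_of_pos_right hD hσV]
  have := Real.logb_pos one_lt_two h
  positivity

theorem Fsum_nonneg (σX2 σV2 D κx κy : ℝ) : 0 ≤ Fsum σX2 σV2 D κx κy :=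
  add_nonneg (le_max_right _ _) (le_max_right _ _)

theorem Fsum_self_zero_le_RCR {σX2 σV2 D : ℝ} (hσX : 0 < σX2) (hσV : 0 < σV2) (hD0 : 0 < D)
    (hD : D < σX2) : Fsum σX2 σV2 D D 0 ≤ RCR σX2 σV2 D := by
  have hpos := RCR_pos hσX hσV hD0 hD
  have hsub : 0 < σX2 - D := sub_pos.2 hD
  have hfwd : (1 / 2) * Real.logb 2 (σX2 * σV2 / (D * (σX2 + σV2))) ≤ RCR σX2 σV2 D := by
    unfold RCR
    refine mul_le_mul_of_nonneg_left
      (Real.logb_le_logb_of_le one_lt_two (by positivity) ?_) (by norm_num)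
    rw [div_mul_div_comm, mul_comm D]
    gcongr
    linarith
  have h1 : D * (σX2 + σV2) - 0 ^ 2 = D * (σX2 + σV2) := by ring
  have h2 : (σX2 * σV2 / (σX2 + σV2)) * ((D + σX2 - 2 * D) / (D * σX2 - D ^ 2))
      = σX2 * σV2 / (D * (σX2 + σV2)) := by
    rw [show D + σX2 - 2 * D = σX2 - D by ring, show D * σX2 - D ^ 2 = D * (σX2 - D) by ring]
    field_simp
  have hbwd : (1 / 2) * Real.logb 2 (σV2 * D / (D * (σX2 + σV2))) ≤ 0 := by
    have : Real.logb 2 (σV2 * D / (D * (σX2 + σV2))) ≤ 0 := by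
      refine Real.logb_nonpos one_lt_two (by positivity) ?_
      rw [div_le_one (by positivity)]
      nlinarith [mul_pos hD0 hσX]
    linarith
  unfold Fsum
  rw [h1, h2, max_eq_right hbwd, add_zero, max_self]
  exact max_le hfwd hpos.le

/-- **Interaction never requires more sum rate than one-way communication with common
reconstruction.** For all `σX², σV² > 0` and all `0 < D < σX²`, there exist admissible
`κx, κy` (with `κx² < D σX²` and `κy² < D σY²`) such that `F(D, κx, κy) ≤ R_CR(D)`; hence
`R*_sum(D) ≤ R_CR(D)` and equivalently `R*_sum(D)/R_CR(D) ≤ 1` (where `R_CR(D) > 0`). -/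
theorem interactive_sum_rate_le_one_way
    (σX2 σV2 D : ℝ) (hσX : 0 < σX2) (hσV : 0 < σV2) (hD0 : 0 < D) (hD : D < σX2) :
    (∃ κx κy : ℝ, κx ^ 2 < D * σX2 ∧ κy ^ 2 < D * (σX2 + σV2) ∧
      Fsum σX2 σV2 D κx κy ≤ RCR σX2 σV2 D) ∧
    0 < RCR σX2 σV2 D ∧
    RstarSum σX2 σV2 D / RCR σX2 σV2 D ≤ 1 := by
  have hpos := RCR_pos hσX hσV hD0 hD
  have hle := Fsum_self_zero_le_RCR hσX hσV hD0 hD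
  have hx : D ^ 2 < D * σX2 := by nlinarith
  have hy : (0 : ℝ) ^ 2 < D * (σX2 + σV2) := by
    rw [zero_pow two_ne_zero]
    positivity
  refine ⟨⟨D, 0, hx, hy, hle⟩, hpos, (div_le_one hpos).2 (le_trans ?_ hle)⟩
  refine csInf_le ⟨0, ?_⟩ ⟨D, 0, hx, hy, rfl⟩
  rintro r ⟨κx, κy, -, -, rfl⟩
  exact Fsum_nonneg ..

end IFCR

end
end

section
/- Markov chain lemma used in the converse of Theorem 1: In the interactive coding setup, for every i ∈ {1,…,n} and every k ∈ {0,1,…,t}, the Markov chain X_i − (X^{i−1}, M^k, Y_i^n) − Y^{i−1} holds; that is, X_i and (Y_1,…,Y_{i−1}) are conditionally independent given (X_1,…,X_{i−1}, M_1,…,M_k, Y_i, Y_{i+1},…,Y_n). -/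
/-!
Fix two source realizations `s`, `s'` lying in the same fibre of the conditioning variable
`(X^{i-1}, M^{kk}, Y_i^n)`, and exchange their letters at positions `< i`. Since the pmf is a
product, the weight of the pair is unchanged. Since `s` and `s'` agree in `X^{i-1}` and `Y_i^n`,
the exchange merely turns the pairs of sequences `(x, y)`, `(x', y')` into `(x, y')`, `(x', y)`,
and the transcripts `M^{kk}` do not change because the fibres of an interactive transcript are
combinatorial rectangles (`transcript_rectangle`). Thus the exchange is a weight-preserving
involution which keeps the conditioning variable and `X_i` and swaps the values of `Y^{i-1}`;
such an involution yields conditional independence (`condIndep_of_swap`).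
-/

open scoped Classical BigOperators

noncomputable section

namespace IFC

variable {Ω : Type*} [Fintype Ω]

variable {X Y ZA ZB HZA HZB HWA HWB : Type*}

/-- Rectangle property of interactive transcripts: if the first `kk` messages on `(x, y)` and on
`(x', y')` coincide, then the mixed input `(x, y')` produces these messages as well. -/
theorem transcript_rectangle {t n : ℕ} {k : Fin t → ℕ}
    {msg : (Fin n → X) → (Fin n → Y) → ∀ j : Fin t, Fin (k j)} (hmsg : ValidCode msg)
    {kk : ℕ} {x x' : Fin n → X} {y y' : Fin n → Y}
    (h : ∀ j : Fin t, j.val < kk → msg x y j = msg x' y' j) :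
    ∀ j : Fin t, j.val < kk → msg x y' j = msg x y j := by
  intro j
  induction j using WellFoundedLT.induction with
  | ind j ih =>
    intro hj
    have hlt : ∀ i, i < j → i.val < kk := fun i hi => lt_trans hi hj
    rcases Nat.even_or_odd j.val with he | ho
    · exact ((hmsg j).1 he x y y' fun i hi => (ih i hi (hlt i hi)).symm).symm
    · exact ((hmsg j).2 ho x x' y' fun i hi =>
        (ih i hi (hlt i hi)).trans (h i (hlt i hi))).trans (h j hj).symm

/-- A product of two probabilities is a sum over pairs of outcomes. -/
theorem pr_mul_pr (μ : Ω → ℝ) (E F : Ω → Prop) :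
    pr μ E * pr μ F = ∑ q : Ω × Ω, if E q.1 ∧ F q.2 then μ q.1 * μ q.2 else 0 := by
  unfold pr
  rw [Finset.sum_mul_sum, Fintype.sum_prod_type]
  refine Finset.sum_congr rfl fun a _ => Finset.sum_congr rfl fun b _ => ?_
  by_cases h1 : E a <;> by_cases h2 : F b <;> simp [h1, h2]

/-- Conditional independence from a weight-preserving involution `T` of pairs of outcomes that
keeps `f`, exchanges the two values of `h`, and stays within each fibre of `g`. -/
theorem condIndep_of_swap {A B C : Type*} (μ : Ω → ℝ) (f : Ω → A) (g : Ω → B) (h : Ω → C)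
    (T : Ω × Ω → Ω × Ω) (hT : Function.Involutive T)
    (hμ : ∀ q, μ (T q).1 * μ (T q).2 = μ q.1 * μ q.2)
    (hf : ∀ q, f (T q).1 = f q.1)
    (hh : ∀ q, h (T q).2 = h q.1)
    (hg : ∀ q, g q.1 = g q.2 → g (T q).1 = g q.1 ∧ g (T q).2 = g q.1) :
    CondIndep μ f g h := by
  intro a b c
  rw [pr_mul_pr, pr_mul_pr]
  refine Fintype.sum_equiv hT.toPerm _ _ fun q => ?_
  simp only [Function.Involutive.coe_toPerm, hμ, hf, hh]
  congr 1
  refine propext ⟨?_, ?_⟩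
  · rintro ⟨⟨h1, h2, h3⟩, h4⟩
    obtain ⟨h5, h6⟩ := hg q (h2.trans h4.symm)
    exact ⟨⟨h1, h5.trans h2⟩, h6.trans h2, h3⟩
  · rintro ⟨⟨h1, h2⟩, h3, h4⟩
    -- The fibre condition is transported back along `T`, which is its own inverse.
    obtain ⟨h5, h6⟩ := hg (T q) (h2.trans h3.symm)
    rw [hT q] at h5 h6
    exact ⟨⟨h1, h5.trans h2, h4⟩, h6.trans h2⟩

/-- Exchange of the letters at positions `< i` between two sequences. -/
def swapPrefix {S : Type*} {n : ℕ} (i : Fin n) (q : (Fin n → S) × (Fin n → S)) :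
    (Fin n → S) × (Fin n → S) :=
  (fun l => if l < i then q.2 l else q.1 l, fun l => if l < i then q.1 l else q.2 l)

theorem swapPrefix_involutive {S : Type*} {n : ℕ} (i : Fin n) :
    Function.Involutive (swapPrefix (S := S) i) := by
  intro q
  refine Prod.ext ?_ ?_ <;> funext l <;> by_cases hl : l < i <;> simp [swapPrefix, hl]

/-- **Markov chain lemma used in the converse of Theorem 1.** In the interactive coding
setup, for every letter index `i ∈ {1, …, n}` and every number of messages `kk ∈ {0, 1, …, t}`,
the Markov chain `X_i − (X^{i−1}, M^{kk}, Y_i^n) − Y^{i−1}` holds: `X_i` and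
`(Y_1, …, Y_{i−1})` are conditionally independent given
`(X_1, …, X_{i−1}, M_1, …, M_{kk}, Y_i, …, Y_n)`. -/
theorem markov_chain_lemma
    {X Y : Type*} [Fintype X] [Fintype Y]
    (p : X × Y → ℝ) (hp : IsPMF p)
    {t n : ℕ} {k : Fin t → ℕ}
    (msg : (Fin n → X) → (Fin n → Y) → ∀ j : Fin t, Fin (k j))
    (hmsg : ValidCode msg)
    (i : Fin n) (kk : ℕ) (hkk : kk ≤ t) :
    CondIndep (prodPMF p n)
      -- X_i
      (fun s => (s i).1)
      -- (X^{i−1}, M^{kk}, Y_i^n)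
      (fun s => ((fun i' : {i' : Fin n // i' < i} => (s i'.1).1),
                 (fun j : {j : Fin t // j.val < kk} => msg (xs s) (ys s) j.1),
                 (fun i' : {i' : Fin n // i ≤ i'} => (s i'.1).2)))
      -- Y^{i−1}
      (fun s => fun i' : {i' : Fin n // i' < i} => (s i'.1).2) := by
  refine condIndep_of_swap _ _ _ _ (swapPrefix i) (swapPrefix_involutive i) ?_ ?_ ?_ ?_
  · intro q
    simp only [prodPMF, ← Finset.prod_mul_distrib]
    refine Finset.prod_congr rfl fun l _ => ?_
    by_cases hl : l < i <;> simp [swapPrefix, hl, mul_comm]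
  · intro q
    simp [swapPrefix]
  · intro q
    funext l
    simp [swapPrefix, l.2]
  · rintro ⟨s, s'⟩ hss
    simp only [Prod.mk.injEq] at hss
    obtain ⟨hx, hm, hy⟩ := hss
    have hx' : ∀ l, l < i → (s l).1 = (s' l).1 := fun l hl => congrFun hx ⟨l, hl⟩
    have hy' : ∀ l, ¬ l < i → (s l).2 = (s' l).2 := fun l hl =>
      congrFun hy ⟨l, not_lt.mp hl⟩
    have hm' : ∀ j : Fin t, j.val < kk → msg (xs s) (ys s) j = msg (xs s') (ys s') j :=
      fun j hj => congrFun hm ⟨j, hj⟩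
    -- On a common fibre the exchange turns `(x, y)`, `(x', y')` into `(x, y')`, `(x', y)`.
    have e1 : xs (swapPrefix i (s, s')).1 = xs s := by
      funext l
      by_cases hl : l < i <;> simp [xs, swapPrefix, hl, hx']
    have e2 : ys (swapPrefix i (s, s')).1 = ys s' := by
      funext l
      by_cases hl : l < i <;> simp [ys, swapPrefix, hl, hy']
    have e3 : xs (swapPrefix i (s, s')).2 = xs s' := by
      funext l
      by_cases hl : l < i <;> simp [xs, swapPrefix, hl, hx']
    have e4 : ys (swapPrefix i (s, s')).2 = ys s := by
      funext l
      by_cases hl : l < i <;> simp [ys, swapPrefix, hl, hy']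
    refine ⟨Prod.ext ?_ (Prod.ext ?_ ?_), Prod.ext ?_ (Prod.ext ?_ ?_)⟩
    · funext l
      exact congrFun e1 l.1
    · funext j
      simp only [e1, e2]
      exact transcript_rectangle hmsg hm' j.1 j.2
    · funext l
      exact (congrFun e2 l.1).trans (hy' l.1 (not_lt.mpr l.2)).symm
    · funext l
      exact (congrFun e3 l.1).trans (hx' l.1 l.2).symm
    · funext j
      simp only [e3, e4]
      exact (transcript_rectangle hmsg (fun j hj => (hm' j hj).symm) j.1 j.2).trans
        (hm' j.1 j.2).symm
    · funext l
      exact congrFun e4 l.1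

end IFC

end
end
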